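/- Let m, n ≥ 1 and k ≥ 1, d ≥ 1 be integers. The complete bipartite graph K_{m,n}, with parts X = {x_1, …, x_m} and Y = {y_1, …, y_n}, admits a graceful (k,d)-total coloring; explicitly, the map f defined by f(x_j) = (j − 1)d for j ∈ {1, …, m}, f(y_i) = k + (m − 1)d + m(i − 1)d for i ∈ {1, …, n}, and f(x_j y_i) = f(y_i) − f(x_j) = k + (mi − j)d for all i, j, is a graceful (k,d)-total coloring of K_{m,n}, whose edge colors are exactly {k + jd : 0 ≤ j ≤ mn − 1}. -/

import Mathlib

/-- `(X, Y)` is a bipartition of the graph `G`: every vertex lies in exactly one of `X, Y`,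
and every edge joins a vertex of `X` to a vertex of `Y`. -/
def IsBipartitionOf {V : Type} (G : SimpleGraph V) (X Y : Set V) : Prop :=
  (∀ v : V, v ∈ X ∨ v ∈ Y) ∧ Disjoint X Y ∧
    ∀ ⦃u v : V⦄, G.Adj u v → (u ∈ X ∧ v ∈ Y) ∨ (u ∈ Y ∧ v ∈ X)

/-- The vertex/edge color membership constraints common to all `(k,d)`-total colorings:
colors of `X`-vertices are multiples of `d`, colors of `Y`-vertices and of edges lie in
`{k + jd : j ≥ 0}`. -/
def KDTotalVertexCond {V : Type} (G : SimpleGraph V) (X Y : Set V) (k d : ℕ)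
    (fV : V → ℕ) (fE : Sym2 V → ℕ) : Prop :=
  (∀ x ∈ X, d ∣ fV x) ∧
  (∀ y ∈ Y, ∃ j : ℕ, fV y = k + j * d) ∧
  (∀ ⦃u v : V⦄, G.Adj u v → ∃ j : ℕ, fE s(u, v) = k + j * d)

/-- The set of colors used on the edges of `G`. -/
def EdgeColorSet {V : Type} (G : SimpleGraph V) (fE : Sym2 V → ℕ) : Set ℕ :=
  {c : ℕ | ∃ u v : V, G.Adj u v ∧ fE s(u, v) = c}

/-- The set `{k + jd : 0 ≤ j ≤ q - 1}`. -/
def ArithProgSet (k d q : ℕ) : Set ℕ := {c : ℕ | ∃ j : ℕ, j < q ∧ c = k + j * d}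

/-- The odd set `{k + (2j - 1)d : 1 ≤ j ≤ q}`. -/
def OddArithProgSet (k d q : ℕ) : Set ℕ :=
  {c : ℕ | ∃ j : ℕ, 1 ≤ j ∧ j ≤ q ∧ c = k + (2 * j - 1) * d}

/-- A graceful `(k,d)`-total coloring of `G` (with bipartition `(X,Y)` and `q` edges). -/
def GracefulKDTotalColoring {V : Type} (G : SimpleGraph V) (X Y : Set V) (k d q : ℕ)
    (fV : V → ℕ) (fE : Sym2 V → ℕ) : Prop :=
  KDTotalVertexCond G X Y k d fV fE ∧
  (∀ ⦃u v : V⦄, G.Adj u v → fE s(u, v) = Nat.dist (fV u) (fV v)) ∧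
  EdgeColorSet G fE = ArithProgSet k d q

/-- A harmonious `(k,d)`-total coloring of `G`:
`f(uv) - k ≡ f(u) + f(v) - k (mod qd)` for every edge `uv`. -/
def HarmoniousKDTotalColoring {V : Type} (G : SimpleGraph V) (X Y : Set V) (k d q : ℕ)
    (fV : V → ℕ) (fE : Sym2 V → ℕ) : Prop :=
  KDTotalVertexCond G X Y k d fV fE ∧
  (∀ ⦃u v : V⦄, G.Adj u v →
    Int.ModEq ((q * d : ℕ) : ℤ) ((fE s(u, v) : ℤ) - (k : ℤ))
      (((fV u : ℤ) + (fV v : ℤ)) - (k : ℤ))) ∧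
  EdgeColorSet G fE = ArithProgSet k d q

/-- An edge-magic `(k,d)`-total coloring: `f(u) + f(uv) + f(v)` is constant. -/
def EdgeMagicKDTotalColoring {V : Type} (G : SimpleGraph V) (X Y : Set V) (k d q : ℕ)
    (fV : V → ℕ) (fE : Sym2 V → ℕ) : Prop :=
  KDTotalVertexCond G X Y k d fV fE ∧
  (∃ c : ℕ, ∀ ⦃u v : V⦄, G.Adj u v → fV u + fE s(u, v) + fV v = c) ∧
  EdgeColorSet G fE = ArithProgSet k d q

/-- An edge-difference `(k,d)`-total coloring: `f(uv) + |f(u) - f(v)|` is constant. -/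
def EdgeDifferenceKDTotalColoring {V : Type} (G : SimpleGraph V) (X Y : Set V) (k d q : ℕ)
    (fV : V → ℕ) (fE : Sym2 V → ℕ) : Prop :=
  KDTotalVertexCond G X Y k d fV fE ∧
  (∃ c : ℕ, ∀ ⦃u v : V⦄, G.Adj u v → fE s(u, v) + Nat.dist (fV u) (fV v) = c) ∧
  EdgeColorSet G fE = ArithProgSet k d q

/-- A graceful-difference `(k,d)`-total coloring: `||f(u) - f(v)| - f(uv)|` is constant. -/
def GracefulDifferenceKDTotalColoring {V : Type} (G : SimpleGraph V) (X Y : Set V) (k d q : ℕ)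
    (fV : V → ℕ) (fE : Sym2 V → ℕ) : Prop :=
  KDTotalVertexCond G X Y k d fV fE ∧
  (∃ c : ℕ, ∀ ⦃u v : V⦄, G.Adj u v →
    ((Nat.dist (fV u) (fV v) : ℤ) - (fE s(u, v) : ℤ)).natAbs = c) ∧
  EdgeColorSet G fE = ArithProgSet k d q

/-- A felicitous-difference `(k,d)`-total coloring: `|f(u) + f(v) - f(uv)|` is constant. -/
def FelicitousDifferenceKDTotalColoring {V : Type} (G : SimpleGraph V) (X Y : Set V) (k d q : ℕ)
    (fV : V → ℕ) (fE : Sym2 V → ℕ) : Prop :=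
  KDTotalVertexCond G X Y k d fV fE ∧
  (∃ c : ℕ, ∀ ⦃u v : V⦄, G.Adj u v →
    (((fV u : ℤ) + (fV v : ℤ)) - (fE s(u, v) : ℤ)).natAbs = c) ∧
  EdgeColorSet G fE = ArithProgSet k d q

/-- An edge-antimagic `(k,d)`-total coloring: the sums `f(u) + f(uv) + f(v)` over the edges
form the set `{2k + 2(a+j)d : 0 ≤ j ≤ q - 1}` for some `a ≥ 0`. -/
def EdgeAntimagicKDTotalColoring {V : Type} (G : SimpleGraph V) (X Y : Set V) (k d q : ℕ)
    (fV : V → ℕ) (fE : Sym2 V → ℕ) : Prop :=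
  KDTotalVertexCond G X Y k d fV fE ∧
  ∃ a : ℕ, {c : ℕ | ∃ u v : V, G.Adj u v ∧ fV u + fE s(u, v) + fV v = c}
      = {c : ℕ | ∃ j : ℕ, j < q ∧ c = 2 * k + 2 * (a + j) * d}

/-- An odd-edge graceful-difference `(k,d)`-total coloring. -/
def OddEdgeGracefulDifferenceKDTotalColoring {V : Type} (G : SimpleGraph V) (X Y : Set V)
    (k d q : ℕ) (fV : V → ℕ) (fE : Sym2 V → ℕ) : Prop :=
  KDTotalVertexCond G X Y k d fV fE ∧
  (∃ c : ℕ, ∀ ⦃u v : V⦄, G.Adj u v →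
    ((Nat.dist (fV u) (fV v) : ℤ) - (fE s(u, v) : ℤ)).natAbs = c) ∧
  EdgeColorSet G fE = OddArithProgSet k d q

/-- An odd-edge edge-difference `(k,d)`-total coloring. -/
def OddEdgeEdgeDifferenceKDTotalColoring {V : Type} (G : SimpleGraph V) (X Y : Set V)
    (k d q : ℕ) (fV : V → ℕ) (fE : Sym2 V → ℕ) : Prop :=
  KDTotalVertexCond G X Y k d fV fE ∧
  (∃ c : ℕ, ∀ ⦃u v : V⦄, G.Adj u v → fE s(u, v) + Nat.dist (fV u) (fV v) = c) ∧
  EdgeColorSet G fE = OddArithProgSet k d q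

/-- An odd-edge edge-magic `(k,d)`-total coloring. -/
def OddEdgeEdgeMagicKDTotalColoring {V : Type} (G : SimpleGraph V) (X Y : Set V)
    (k d q : ℕ) (fV : V → ℕ) (fE : Sym2 V → ℕ) : Prop :=
  KDTotalVertexCond G X Y k d fV fE ∧
  (∃ c : ℕ, ∀ ⦃u v : V⦄, G.Adj u v → fV u + fE s(u, v) + fV v = c) ∧
  EdgeColorSet G fE = OddArithProgSet k d q

/-- An odd-edge felicitous-difference `(k,d)`-total coloring. -/
def OddEdgeFelicitousDifferenceKDTotalColoring {V : Type} (G : SimpleGraph V) (X Y : Set V)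
    (k d q : ℕ) (fV : V → ℕ) (fE : Sym2 V → ℕ) : Prop :=
  KDTotalVertexCond G X Y k d fV fE ∧
  (∃ c : ℕ, ∀ ⦃u v : V⦄, G.Adj u v →
    (((fV u : ℤ) + (fV v : ℤ)) - (fE s(u, v) : ℤ)).natAbs = c) ∧
  EdgeColorSet G fE = OddArithProgSet k d q

/-- A set-ordered graceful labeling of `G` (with bipartition `(X,Y)` and `q` edges):
an injective map into `{0, …, q}` whose induced edge labels `|f(u) - f(v)|` are exactly
`{1, …, q}`, with `max f(X) < min f(Y)`. -/
def SetOrderedGracefulLabeling {V : Type} (G : SimpleGraph V) (X Y : Set V)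
    (f : V → ℕ) (q : ℕ) : Prop :=
  Function.Injective f ∧ (∀ v : V, f v ≤ q) ∧
  (∀ x ∈ X, ∀ y ∈ Y, f x < f y) ∧
  {c : ℕ | ∃ u v : V, G.Adj u v ∧ Nat.dist (f u) (f v) = c} = Set.Icc 1 q

/-- The explicit vertex coloring of `K_{m,n}` (0-indexed):
`f(x_j) = j·d` and `f(y_i) = k + (m-1)·d + m·i·d`. -/
def KmnVertexColoring (m n k d : ℕ) : Fin m ⊕ Fin n → ℕ
  | Sum.inl j => j * d
  | Sum.inr i => k + (m - 1) * d + m * i * d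

/-- The induced edge coloring `f(xy) = |f(x) - f(y)|` of `K_{m,n}`. -/
def KmnEdgeColoring (m n k d : ℕ) : Sym2 (Fin m ⊕ Fin n) → ℕ :=
  Sym2.lift ⟨fun x y => Nat.dist (KmnVertexColoring m n k d x) (KmnVertexColoring m n k d y),
    fun _ _ => Nat.dist_comm _ _⟩

/-- The 0-indexed bijection behind the coloring of `K_{m,n}`: the edge `x_j y_i` is the
`(m·i + (m - 1 - j))`-th one, so the neighbors of each `y_i` occupy a block of `m` consecutive
positions in reverse order. -/
def kmnEdgeIndex (m n : ℕ) : Fin m × Fin n ≃ Fin (m * n) :=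
  (Equiv.prodComm _ _).trans <| (Equiv.prodCongr (Equiv.refl _) Fin.revPerm).trans <|
    finProdFinEquiv.trans <| finCongr (Nat.mul_comm n m)

section General

variable {V α β : Type}

lemma edgeColorSet_completeBipartiteGraph (fE : Sym2 (α ⊕ β) → ℕ) :
    EdgeColorSet (completeBipartiteGraph α β) fE =
      Set.range fun p : α × β => fE s(Sum.inl p.1, Sum.inr p.2) := by
  ext c
  constructor
  · rintro ⟨a | b, a' | b', hadj, rfl⟩
    · simp at hadj
    · exact ⟨(a, b'), rfl⟩
    · exact ⟨(a', b), congrArg fE Sym2.eq_swap⟩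
    · simp at hadj
  · rintro ⟨⟨a, b⟩, rfl⟩
    exact ⟨Sum.inl a, Sum.inr b, by simp, rfl⟩

lemma arithProgSet_eq_range (k d q : ℕ) :
    ArithProgSet k d q = Set.range fun t : Fin q => k + t * d := by
  ext c
  simp [ArithProgSet, Fin.exists_iff, eq_comm]

lemma GracefulKDTotalColoring.of_edgeColorSet_eq {G : SimpleGraph V} {X Y : Set V} {k d q : ℕ}
    {fV : V → ℕ} {fE : Sym2 V → ℕ} (hX : ∀ x ∈ X, d ∣ fV x)
    (hY : ∀ y ∈ Y, ∃ j : ℕ, fV y = k + j * d)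
    (hdist : ∀ ⦃u v : V⦄, G.Adj u v → fE s(u, v) = Nat.dist (fV u) (fV v))
    (hcolors : EdgeColorSet G fE = ArithProgSet k d q) :
    GracefulKDTotalColoring G X Y k d q fV fE := by
  refine ⟨⟨hX, hY, fun u v huv => ?_⟩, hdist, hcolors⟩
  have hmem : fE s(u, v) ∈ ArithProgSet k d q := hcolors ▸ ⟨u, v, huv, rfl⟩
  obtain ⟨j, -, hj⟩ := hmem
  exact ⟨j, hj⟩

end General

section CompleteBipartite

variable {m n : ℕ} (k d : ℕ) (j : Fin m) (i : Fin n)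

lemma val_kmnEdgeIndex : (kmnEdgeIndex m n (j, i) : ℕ) = m * i + (m - 1) - j := by
  have hval : (kmnEdgeIndex m n (j, i) : ℕ) = m - (j + 1) + m * i := by
    simp [kmnEdgeIndex]
  omega

lemma kmnVertexColoring_inr_eq_add_inl :
    KmnVertexColoring m n k d (Sum.inr i) =
      k + kmnEdgeIndex m n (j, i) * d + KmnVertexColoring m n k d (Sum.inl j) := by
  have hindex : m - 1 + m * i = kmnEdgeIndex m n (j, i) + (j : ℕ) := by
    rw [val_kmnEdgeIndex]
    omega
  simp only [KmnVertexColoring]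
  linear_combination d * hindex

lemma kmnEdgeColoring_eq_sub :
    KmnEdgeColoring m n k d s(Sum.inl j, Sum.inr i) =
      KmnVertexColoring m n k d (Sum.inr i) - KmnVertexColoring m n k d (Sum.inl j) :=
  Nat.dist_eq_sub_of_le <|
    kmnVertexColoring_inr_eq_add_inl k d j i ▸ Nat.le_add_left _ _

lemma kmnEdgeColoring_eq_add_kmnEdgeIndex_mul :
    KmnEdgeColoring m n k d s(Sum.inl j, Sum.inr i) = k + kmnEdgeIndex m n (j, i) * d := by
  rw [kmnEdgeColoring_eq_sub, kmnVertexColoring_inr_eq_add_inl k d j i, Nat.add_sub_cancel]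

variable (m n) in
lemma edgeColorSet_kmnEdgeColoring :
    EdgeColorSet (completeBipartiteGraph (Fin m) (Fin n)) (KmnEdgeColoring m n k d) =
      ArithProgSet k d (m * n) := by
  simp only [edgeColorSet_completeBipartiteGraph, kmnEdgeColoring_eq_add_kmnEdgeIndex_mul,
    arithProgSet_eq_range]
  exact (kmnEdgeIndex m n).surjective.range_comp fun t => k + t * d

lemma dvd_kmnVertexColoring_inl : d ∣ KmnVertexColoring m n k d (Sum.inl j) :=
  Nat.dvd_mul_left d j

lemma kmnVertexColoring_inr :
    KmnVertexColoring m n k d (Sum.inr i) = k + (m - 1 + m * i) * d := by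
  rw [KmnVertexColoring, Nat.add_mul, Nat.add_assoc]

end CompleteBipartite

/-- The explicit map above is a graceful `(k,d)`-total coloring of the
complete bipartite graph `K_{m,n}`, with edge colors exactly `{k + jd : 0 ≤ j ≤ mn - 1}`;
the edge `x_j y_i` (1-indexed: `f(x_j y_i) = k + (mi - j)d`) receives, 0-indexed, the color
`k + (m·i + (m - 1) - j)·d = f(y_i) - f(x_j)`. -/
theorem completeBipartiteGraph_graceful_kd_total_coloring
    (m n k d : ℕ) (hm : 1 ≤ m) (hn : 1 ≤ n) (hk : 1 ≤ k) (hd : 1 ≤ d) :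
    GracefulKDTotalColoring (completeBipartiteGraph (Fin m) (Fin n))
      (Set.range Sum.inl) (Set.range Sum.inr) k d (m * n)
      (KmnVertexColoring m n k d) (KmnEdgeColoring m n k d) ∧
    (∀ (j : Fin m) (i : Fin n),
      KmnEdgeColoring m n k d s(Sum.inl j, Sum.inr i)
        = KmnVertexColoring m n k d (Sum.inr i) - KmnVertexColoring m n k d (Sum.inl j) ∧
      KmnEdgeColoring m n k d s(Sum.inl j, Sum.inr i)
        = k + (m * (i : ℕ) + (m - 1) - (j : ℕ)) * d) := by
  refine ⟨.of_edgeColorSet_eq ?_ ?_ (fun _ _ _ => rfl) (edgeColorSet_kmnEdgeColoring m n k d),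
    fun j i => ⟨kmnEdgeColoring_eq_sub k d j i, ?_⟩⟩
  · rintro _ ⟨j, rfl⟩
    exact dvd_kmnVertexColoring_inl k d j
  · rintro _ ⟨i, rfl⟩
    exact ⟨_, kmnVertexColoring_inr k d i⟩
  · rw [kmnEdgeColoring_eq_add_kmnEdgeIndex_mul, val_kmnEdgeIndex]
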